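/- Let n, Δ, k ∈ ℕ with Δ ≤ n. Set 𝓣 = 𝒯_{n−Δ} × 𝒯ₙ ⊆ V and (n₁, n₂) = (n−Δ, n). Let 𝐓 be a matrix differential operator whose components satisfy T_{ab} = Σ_{i+j ≤ n_b} M_{f^{ab}_{ij}} ∘ D_x^i ∘ D_y^j with all f^{ab}_{ij} = 0 for i + j > k, and suppose 𝐓 preserves 𝓣. Then 𝐓 is a ℂ-linear combination of compositions of elements of the generating set G = {T¹, …, T⁸, J} ∪ {Q⁻_{αβ} : α+β ≤ Δ} ∪ {Q⁺_{αβ} : α+β ≤ Δ} ∪ {id}, each composition being a matrix differential operator of order at most k. -/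

import Mathlib

noncomputable section

open MvPolynomial

/-- The bivariate polynomial ring `R = ℂ[x,y]`. -/
abbrev R2 : Type := MvPolynomial (Fin 2) ℂ

/-- The variable `x`. -/
def Xv : R2 := X 0

/-- The variable `y`. -/
def Yv : R2 := X 1

/-- The partial derivative `∂_x` as a `ℂ`-linear endomorphism. -/
def Dx : Module.End ℂ R2 := (pderiv (0 : Fin 2)).toLinearMap

/-- The partial derivative `∂_y` as a `ℂ`-linear endomorphism. -/
def Dy : Module.End ℂ R2 := (pderiv (1 : Fin 2)).toLinearMap

/-- Multiplication by `f` as an endomorphism. -/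
def Mf (f : R2) : Module.End ℂ R2 := LinearMap.mulLeft ℂ f

/-- All compositions (products) of at most `k` elements of `S`; the empty
composition is the identity. -/
def prodsLE (k : ℕ) (S : Set (Module.End ℂ R2)) : Set (Module.End ℂ R2) :=
  {T | ∃ l : List (Module.End ℂ R2), l.length ≤ k ∧ (∀ a ∈ l, a ∈ S) ∧ l.prod = T}

/-- The rectangular module `ℛ_{n,m}`. -/
def Rmod (n m : ℕ) : Submodule ℂ R2 :=
  Submodule.span ℂ {P : R2 | ∃ i j : ℕ, i ≤ n ∧ j ≤ m ∧ P = Xv ^ i * Yv ^ j}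

/-- The triangular module `𝒯ₙ`. -/
def Tmod (n : ℕ) : Submodule ℂ R2 :=
  Submodule.span ℂ {P : R2 | ∃ i j : ℕ, i + j ≤ n ∧ P = Xv ^ i * Yv ^ j}

/-- The staircase module `𝒮^r_{p,q}`. -/
def Smod (r p q : ℕ) : Submodule ℂ R2 :=
  Submodule.span ℂ {P : R2 | ∃ i j : ℕ, i + r * j ≤ p ∧ j ≤ q ∧ P = Xv ^ i * Yv ^ j}

/-- An endomorphism has nonpositive `y`-degree if it maps each monomial `xᵃyᵇ`
into the span of the monomials `x^c y^e` with `e ≤ b`. -/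
def NonposY (T : Module.End ℂ R2) : Prop :=
  ∀ a b : ℕ, T (Xv ^ a * Yv ^ b) ∈
    Submodule.span ℂ {P : R2 | ∃ c e : ℕ, e ≤ b ∧ P = Xv ^ c * Yv ^ e}

/-- `J¹ = M_{x²}∘D_x + M_{xy}∘D_y − a·M_x`. -/
def J1 (a : ℂ) : Module.End ℂ R2 := Mf (Xv ^ 2) * Dx + Mf (Xv * Yv) * Dy - a • Mf Xv

/-- `J² = M_{xy}∘D_x + M_{y²}∘D_y − a·M_y`. -/
def J2 (a : ℂ) : Module.End ℂ R2 := Mf (Xv * Yv) * Dx + Mf (Yv ^ 2) * Dy - a • Mf Yv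

/-- `J³ = M_y∘D_x`. -/
def J3 : Module.End ℂ R2 := Mf Yv * Dx

/-- `J⁴ = D_x`. -/
def J4 : Module.End ℂ R2 := Dx

/-- `J⁵ = D_y`. -/
def J5 : Module.End ℂ R2 := Dy

/-- `J⁶ = M_x∘D_y`. -/
def J6 : Module.End ℂ R2 := Mf Xv * Dy

/-- `J⁷ = M_x∘D_x − (a/3)·id`. -/
def J7 (a : ℂ) : Module.End ℂ R2 := Mf Xv * Dx - (a / 3) • 1

/-- `J⁸ = M_y∘D_y − (a/3)·id`. -/
def J8 (a : ℂ) : Module.End ℂ R2 := Mf Yv * Dy - (a / 3) • 1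

/-- The rank-2 space `V = R × R`. -/
abbrev V2 : Type := R2 × R2

/-- The matrix operator `𝐓(u,v) = (A u + B v, C u + D v)`. -/
def matOp (A B C D : Module.End ℂ R2) : Module.End ℂ V2 :=
  LinearMap.prod
    (A ∘ₗ LinearMap.fst ℂ R2 R2 + B ∘ₗ LinearMap.snd ℂ R2 R2)
    (C ∘ₗ LinearMap.fst ℂ R2 R2 + D ∘ₗ LinearMap.snd ℂ R2 R2)

/-- The diagonal matrix operator `diag(A, B)`. -/
def dg (A B : Module.End ℂ R2) : Module.End ℂ V2 := matOp A 0 0 B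

/-- The scalar differential operator with coefficients `f` supported on `F`. -/
def diffOp (F : Finset (ℕ × ℕ)) (f : ℕ × ℕ → R2) : Module.End ℂ R2 :=
  ∑ ij ∈ F, Mf (f ij) * Dx ^ ij.1 * Dy ^ ij.2

/-- The index set `{(i,j) : i + j ≤ k}`. -/
def ordIdx (k : ℕ) : Finset (ℕ × ℕ) :=
  (Finset.range (k + 1) ×ˢ Finset.range (k + 1)).filter (fun ij => ij.1 + ij.2 ≤ k)

/-- A scalar differential operator with polynomial coefficients, of order at most `k`. -/
def IsDiffOpLE (A : Module.End ℂ R2) (k : ℕ) : Prop :=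
  ∃ f : ℕ × ℕ → R2, A = diffOp (ordIdx k) f

/-- A matrix differential operator of order at most `k`. -/
def IsMatDiffOpLE (P : Module.End ℂ V2) (k : ℕ) : Prop :=
  ∃ A B C D : Module.End ℂ R2, IsDiffOpLE A k ∧ IsDiffOpLE B k ∧ IsDiffOpLE C k ∧
    IsDiffOpLE D k ∧ P = matOp A B C D

/-- Compositions of elements of `S` which are matrix differential operators of
order at most `k`. -/
def matProdsOrd (k : ℕ) (S : Set (Module.End ℂ V2)) : Set (Module.End ℂ V2) :=
  {P | ∃ l : List (Module.End ℂ V2), (∀ a ∈ l, a ∈ S) ∧ l.prod = P ∧ IsMatDiffOpLE P k}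

/-- Compositions of at most `k` elements of `S`; the empty composition is the identity. -/
def matProdsLE (k : ℕ) (S : Set (Module.End ℂ V2)) : Set (Module.End ℂ V2) :=
  {P | ∃ l : List (Module.End ℂ V2), l.length ≤ k ∧ (∀ a ∈ l, a ∈ S) ∧ l.prod = P}

/-- `Tⁱ = diag(Jⁱ(n−Δ), Jⁱ(n))`. -/
def Tg1 (n Δ : ℕ) : Module.End ℂ V2 := dg (J1 ((n - Δ : ℕ) : ℂ)) (J1 (n : ℂ))
def Tg2 (n Δ : ℕ) : Module.End ℂ V2 := dg (J2 ((n - Δ : ℕ) : ℂ)) (J2 (n : ℂ))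
def Tg3 : Module.End ℂ V2 := dg J3 J3
def Tg4 : Module.End ℂ V2 := dg J4 J4
def Tg5 : Module.End ℂ V2 := dg J5 J5
def Tg6 : Module.End ℂ V2 := dg J6 J6
def Tg7 (n Δ : ℕ) : Module.End ℂ V2 := dg (J7 ((n - Δ : ℕ) : ℂ)) (J7 (n : ℂ))
def Tg8 (n Δ : ℕ) : Module.End ℂ V2 := dg (J8 ((n - Δ : ℕ) : ℂ)) (J8 (n : ℂ))

/-- `J = diag(((n+2Δ)/3)·id, (n/3)·id)`. -/
def Jgen (n Δ : ℕ) : Module.End ℂ V2 :=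
  dg ((((n : ℂ) + 2 * (Δ : ℂ)) / 3) • 1) (((n : ℂ) / 3) • 1)

/-- `Q⁻_{αβ}(u,v) = (0, x^α y^β · u)`. -/
def Qgm (α β : ℕ) : Module.End ℂ V2 := matOp 0 0 (Mf (Xv ^ α * Yv ^ β)) 0

/-- `q̄_{αβ} = (∏_{t=1}^{Δ−α−β}(M_x∘D_x + M_y∘D_y − (n−Δ+t)·id)) ∘ D_x^α ∘ D_y^β`. -/
def qbar (n Δ α β : ℕ) : Module.End ℂ R2 :=
  ((List.range (Δ - α - β)).map
    (fun t => Mf Xv * Dx + Mf Yv * Dy - ((n - Δ + (t + 1) : ℕ) : ℂ) • 1)).prod *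
    Dx ^ α * Dy ^ β

/-- `Q⁺_{αβ}(u,v) = (q̄_{αβ} v, 0)`. -/
def Qgp (n Δ α β : ℕ) : Module.End ℂ V2 := matOp 0 (qbar n Δ α β) 0 0

/-- The generating set `G` for the triangular rank-2 module. -/
def Gtri (n Δ : ℕ) : Set (Module.End ℂ V2) :=
  {Tg1 n Δ, Tg2 n Δ, Tg3, Tg4, Tg5, Tg6, Tg7 n Δ, Tg8 n Δ, Jgen n Δ} ∪
  {P | ∃ α β : ℕ, α + β ≤ Δ ∧ P = Qgm α β} ∪
  {P | ∃ α β : ℕ, α + β ≤ Δ ∧ P = Qgp n Δ α β} ∪ {1}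

/-- The triangular index set `{(i,j) : i + j ≤ a}`. -/
def tIdx (a : ℕ) : Finset (ℕ × ℕ) :=
  (Finset.range (a + 1) ×ˢ Finset.range (a + 1)).filter (fun ij => ij.1 + ij.2 ≤ a)

/-!
Differential operators are graded by their commutator with the Euler operator `E = x D_x + y D_y`.
If a component of degree `d` maps `𝒯_a` to `𝒯_b`, it must kill the homogeneous polynomials of every
degree `w ≤ a` with `w + d > b`. On homogeneous polynomials of degree `w`,
`(w - i - j) D_x^i D_y^j = x D_x^{i+1} D_y^j + y D_x^i D_y^{j+1}`, so modulo operators `B (E - w)`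
all terms can be raised to the same order; there an operator killing these polynomials vanishes,
and hence it is right divisible by `E - w`. Dividing by `E - a`, `E - (a - 1)`, … shows that the
operators mapping `𝒯_a` to `𝒯_b` are spanned by products `M_g D_x^i D_y^j (E - a + r - 1) ⋯ (E - a)`
with `deg g ≤ i + j + r + b - a`. Left multiplication by the `𝔰𝔩₃` generators, which together with
the identity span `M_h D_x`, `M_h D_y` and `M_h (E - b)` for `deg h ≤ 1`, builds these products from
those of order `max (a - b) 0`. In the four matrix entries the latter are `Q⁻`, `Q⁺` and the two
projections, which come from `J` and the identity, or from `Q⁺₀₀ Q⁻₀₀` if `Δ = 0`.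
-/

section WeylAlgebra

theorem pderiv_pderiv_comm {σ R : Type*} [CommRing R] (i j : σ) (p : MvPolynomial σ R) :
    pderiv i (pderiv j p) = pderiv j (pderiv i p) := by
  classical
  have h : ⁅pderiv (R := R) i, pderiv (R := R) j⁆ = 0 := derivation_ext fun k => by
    simp only [Derivation.commutator_apply, pderiv_X, Pi.single_apply, apply_ite (pderiv _),
      pderiv_one, map_zero, ite_self, sub_self, Derivation.zero_apply]
  exact sub_eq_zero.1 (DFunLike.congr_fun h p)

theorem Dx_mul_Dy : Dx * Dy = Dy * Dx :=
  LinearMap.ext (pderiv_pderiv_comm 0 1)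

theorem commute_Dx_Dy : Commute Dx Dy := Dx_mul_Dy

theorem Mf_eq_lmul (g : R2) : Mf g = Algebra.lmul ℂ R2 g := rfl

theorem Mf_zero : Mf 0 = 0 := map_zero (Algebra.lmul ℂ R2)

theorem Mf_one : Mf 1 = 1 := map_one (Algebra.lmul ℂ R2)

theorem Mf_add (g h : R2) : Mf (g + h) = Mf g + Mf h := map_add (Algebra.lmul ℂ R2) g h

theorem Mf_smul (c : ℂ) (g : R2) : Mf (c • g) = c • Mf g := map_smul (Algebra.lmul ℂ R2) c g

theorem Mf_mul (g h : R2) : Mf (g * h) = Mf g * Mf h := map_mul (Algebra.lmul ℂ R2) g h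

theorem Dx_mul_Mf (g : R2) : Dx * Mf g = Mf g * Dx + Mf (Dx g) :=
  LinearMap.ext fun p => by
    change pderiv 0 (g * p) = g * pderiv 0 p + pderiv 0 g * p
    rw [Derivation.leibniz, smul_eq_mul, smul_eq_mul, mul_comm p]

theorem Dy_mul_Mf (g : R2) : Dy * Mf g = Mf g * Dy + Mf (Dy g) :=
  LinearMap.ext fun p => by
    change pderiv 1 (g * p) = g * pderiv 1 p + pderiv 1 g * p
    rw [Derivation.leibniz, smul_eq_mul, smul_eq_mul, mul_comm p]

theorem Dx_monomial (u v : ℕ) : Dx (Xv ^ u * Yv ^ v) = u • (Xv ^ (u - 1) * Yv ^ v) := by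
  have hX : pderiv 0 Xv = 1 := pderiv_X_self 0
  have hY : pderiv 0 Yv = 0 := pderiv_X_of_ne one_ne_zero
  simp only [Dx, Derivation.coeFn_coe, Derivation.leibniz, Derivation.leibniz_pow, hX, hY,
    smul_eq_mul, nsmul_eq_mul]
  ring

theorem Dy_monomial (u v : ℕ) : Dy (Xv ^ u * Yv ^ v) = v • (Xv ^ u * Yv ^ (v - 1)) := by
  have hX : pderiv 1 Xv = 0 := pderiv_X_of_ne zero_ne_one
  have hY : pderiv 1 Yv = 1 := pderiv_X_self 1
  simp only [Dy, Derivation.coeFn_coe, Derivation.leibniz, Derivation.leibniz_pow, hX, hY,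
    smul_eq_mul, nsmul_eq_mul]
  ring

theorem Dx_pow_monomial (i u v : ℕ) :
    (Dx ^ i) (Xv ^ u * Yv ^ v) = u.descFactorial i • (Xv ^ (u - i) * Yv ^ v) := by
  induction i with
  | zero => simp
  | succ i ih =>
    rw [pow_succ', Module.End.mul_apply, ih, map_nsmul, Dx_monomial, smul_smul,
      Nat.descFactorial_succ, Nat.sub_sub, mul_comm]

theorem Dy_pow_monomial (j u v : ℕ) :
    (Dy ^ j) (Xv ^ u * Yv ^ v) = v.descFactorial j • (Xv ^ u * Yv ^ (v - j)) := by
  induction j with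
  | zero => simp
  | succ j ih =>
    rw [pow_succ', Module.End.mul_apply, ih, map_nsmul, Dy_monomial, smul_smul,
      Nat.descFactorial_succ, Nat.sub_sub, mul_comm]

end WeylAlgebra

section NormalOrdering

/-- The normally ordered differential monomial `M_g ∘ D_x^i ∘ D_y^j`. -/
def diffMon (g : R2) (i j : ℕ) : Module.End ℂ R2 := Mf g * Dx ^ i * Dy ^ j

theorem diffMon_add (g h : R2) (i j : ℕ) :
    diffMon (g + h) i j = diffMon g i j + diffMon h i j := by
  simp only [diffMon, Mf_add, add_mul]

theorem diffMon_smul (c : ℂ) (g : R2) (i j : ℕ) : diffMon (c • g) i j = c • diffMon g i j := by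
  simp only [diffMon, Mf_smul, smul_mul_assoc]

theorem diffMon_sum {ι : Type*} (s : Finset ι) (g : ι → R2) (i j : ℕ) :
    diffMon (∑ l ∈ s, g l) i j = ∑ l ∈ s, diffMon (g l) i j := by
  simp only [diffMon, Mf_eq_lmul, map_sum, Finset.sum_mul]

theorem diffMon_zero_zero (g : R2) : diffMon g 0 0 = Mf g := by
  simp only [diffMon, pow_zero, mul_one]

theorem Mf_mul_diffMon (h g : R2) (i j : ℕ) : Mf h * diffMon g i j = diffMon (h * g) i j := by
  simp only [diffMon, ← mul_assoc, Mf_mul]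

theorem Dx_mul_diffMon (g : R2) (i j : ℕ) :
    Dx * diffMon g i j = diffMon g (i + 1) j + diffMon (Dx g) i j := by
  rw [diffMon, ← mul_assoc, ← mul_assoc, Dx_mul_Mf, add_mul, add_mul, mul_assoc (Mf g) Dx,
    ← pow_succ']
  rfl

theorem Dy_mul_diffMon (g : R2) (i j : ℕ) :
    Dy * diffMon g i j = diffMon g i (j + 1) + diffMon (Dy g) i j := by
  have hDy : Dy * Dx ^ i = Dx ^ i * Dy := (commute_Dx_Dy.pow_left i).eq.symm
  rw [diffMon, ← mul_assoc, ← mul_assoc, Dy_mul_Mf, add_mul, add_mul, mul_assoc (Mf g), hDy,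
    ← mul_assoc, mul_assoc _ Dy, ← pow_succ']
  rfl

theorem diffMon_apply_monomial (g : R2) (i j u v : ℕ) :
    diffMon g i j (Xv ^ u * Yv ^ v) =
      (u.descFactorial i * v.descFactorial j) • (g * (Xv ^ (u - i) * Yv ^ (v - j))) := by
  change g * (Dx ^ i) ((Dy ^ j) (Xv ^ u * Yv ^ v)) = _
  rw [Dy_pow_monomial, map_nsmul, Dx_pow_monomial, smul_smul, mul_smul_comm, mul_comm]

/-- The space of differential operators with polynomial coefficients supported on `F`. -/
def diffOps (F : Finset (ℕ × ℕ)) : Submodule ℂ (Module.End ℂ R2) where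
  carrier := {A | ∃ f, A = diffOp F f}
  zero_mem' := ⟨0, by simp [diffOp, Mf_zero]⟩
  add_mem' := by
    rintro _ _ ⟨f, rfl⟩ ⟨g, rfl⟩
    exact ⟨f + g, by simp [diffOp, Mf_add, add_mul, Finset.sum_add_distrib]⟩
  smul_mem' := by
    rintro c _ ⟨f, rfl⟩
    exact ⟨c • f, by simp [diffOp, Mf_smul, Finset.smul_sum]⟩

theorem diffMon_mem_diffOps {F : Finset (ℕ × ℕ)} {i j : ℕ} (h : (i, j) ∈ F) (g : R2) :
    diffMon g i j ∈ diffOps F := by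
  refine ⟨Pi.single (i, j) g, ?_⟩
  rw [diffOp, Finset.sum_eq_single_of_mem _ h fun ij _ hij => by
    rw [Pi.single_eq_of_ne hij, Mf_zero, zero_mul, zero_mul], Pi.single_eq_same, diffMon]

theorem diffOps_le {F : Finset (ℕ × ℕ)} {N : Submodule ℂ (Module.End ℂ R2)}
    (h : ∀ g i j, (i, j) ∈ F → diffMon g i j ∈ N) : diffOps F ≤ N := by
  rintro _ ⟨f, rfl⟩
  exact sum_mem fun ij hij => h _ _ _ hij

/-- The space of differential operators with polynomial coefficients of order at most `k`;
`A ∈ ordLE k` unfolds to `IsDiffOpLE A k`. -/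
def ordLE (k : ℕ) : Submodule ℂ (Module.End ℂ R2) := diffOps (ordIdx k)

theorem mem_ordIdx {k : ℕ} {ij : ℕ × ℕ} : ij ∈ ordIdx k ↔ ij.1 + ij.2 ≤ k := by
  simp only [ordIdx, Finset.mem_filter, Finset.mem_product, Finset.mem_range]
  lia

theorem diffMon_mem_ordLE {i j k : ℕ} (h : i + j ≤ k) (g : R2) : diffMon g i j ∈ ordLE k :=
  diffMon_mem_diffOps (mem_ordIdx.2 h) g

theorem ordLE_le {k : ℕ} {N : Submodule ℂ (Module.End ℂ R2)}
    (h : ∀ g i j, i + j ≤ k → diffMon g i j ∈ N) : ordLE k ≤ N :=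
  diffOps_le fun g i j hij => h g i j (mem_ordIdx.1 hij)

theorem ordLE_mono : Monotone ordLE := fun _ _ hkl =>
  ordLE_le fun g _ _ h => diffMon_mem_ordLE (h.trans hkl) g

theorem diffOp_tIdx_mem_ordLE {a k : ℕ} {f : ℕ × ℕ → R2} (hf : ∀ ij, k < ij.1 + ij.2 → f ij = 0) :
    diffOp (tIdx a) f ∈ ordLE (min k a) := by
  refine sum_mem fun ij hij => ?_
  rcases lt_or_ge k (ij.1 + ij.2) with hk | hk
  · simp only [hf ij hk, Mf_zero, zero_mul, zero_mem]
  · exact diffMon_mem_ordLE (le_min hk (mem_ordIdx.1 hij)) (f ij)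

variable {A B : Module.End ℂ R2} {k l : ℕ}

theorem Mf_mul_mem_ordLE (h : R2) (hA : A ∈ ordLE k) : Mf h * A ∈ ordLE k := by
  have hle : ordLE k ≤ (ordLE k).comap (LinearMap.mulLeft ℂ (Mf h)) :=
    ordLE_le fun g i j hij => by
      rw [Submodule.mem_comap, LinearMap.mulLeft_apply, Mf_mul_diffMon]
      exact diffMon_mem_ordLE hij _
  exact hle hA

theorem Dx_mul_mem_ordLE (hA : A ∈ ordLE k) : Dx * A ∈ ordLE (k + 1) := by
  have hle : ordLE k ≤ (ordLE (k + 1)).comap (LinearMap.mulLeft ℂ Dx) :=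
    ordLE_le fun g i j hij => by
      rw [Submodule.mem_comap, LinearMap.mulLeft_apply, Dx_mul_diffMon]
      exact add_mem (diffMon_mem_ordLE (by lia) _) (diffMon_mem_ordLE (by lia) _)
  exact hle hA

theorem Dy_mul_mem_ordLE (hA : A ∈ ordLE k) : Dy * A ∈ ordLE (k + 1) := by
  have hle : ordLE k ≤ (ordLE (k + 1)).comap (LinearMap.mulLeft ℂ Dy) :=
    ordLE_le fun g i j hij => by
      rw [Submodule.mem_comap, LinearMap.mulLeft_apply, Dy_mul_diffMon]
      exact add_mem (diffMon_mem_ordLE (by lia) _) (diffMon_mem_ordLE (by lia) _)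
  exact hle hA

theorem Dx_pow_mul_mem_ordLE (i : ℕ) (hA : A ∈ ordLE k) : Dx ^ i * A ∈ ordLE (k + i) := by
  induction i with
  | zero => simpa using hA
  | succ i ih => rw [pow_succ', mul_assoc, ← add_assoc]; exact Dx_mul_mem_ordLE ih

theorem Dy_pow_mul_mem_ordLE (j : ℕ) (hA : A ∈ ordLE k) : Dy ^ j * A ∈ ordLE (k + j) := by
  induction j with
  | zero => simpa using hA
  | succ j ih => rw [pow_succ', mul_assoc, ← add_assoc]; exact Dy_mul_mem_ordLE ih

theorem mul_mem_ordLE (hA : A ∈ ordLE k) (hB : B ∈ ordLE l) : A * B ∈ ordLE (k + l) := by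
  have hle : ordLE k ≤ (ordLE (k + l)).comap (LinearMap.mulRight ℂ B) :=
    ordLE_le fun g i j hij => by
      rw [Submodule.mem_comap, LinearMap.mulRight_apply, diffMon, mul_assoc, mul_assoc]
      exact Mf_mul_mem_ordLE _ <| ordLE_mono (by lia) <| Dx_pow_mul_mem_ordLE i <|
        Dy_pow_mul_mem_ordLE j hB
  exact hle hA

theorem Mf_mem_ordLE (g : R2) : Mf g ∈ ordLE k :=
  diffMon_zero_zero g ▸ diffMon_mem_ordLE (Nat.zero_le k) g

theorem one_mem_ordLE : 1 ∈ ordLE k := Mf_one ▸ Mf_mem_ordLE 1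

theorem Dx_mem_ordLE : Dx ∈ ordLE 1 := by simpa using Dx_mul_mem_ordLE (one_mem_ordLE (k := 0))

theorem Dy_mem_ordLE : Dy ∈ ordLE 1 := by simpa using Dy_mul_mem_ordLE (one_mem_ordLE (k := 0))

end NormalOrdering

section Grading

/-- The Euler operator `M_x ∘ D_x + M_y ∘ D_y`. -/
def euler : Module.End ℂ R2 := Mf Xv * Dx + Mf Yv * Dy

/-- The shifted Euler operator `E - c`, which vanishes on homogeneous polynomials of degree `c`. -/
def eulerSub (c : ℂ) : Module.End ℂ R2 := euler - c • 1

theorem isHomogeneous_Xv : Xv.IsHomogeneous 1 := isHomogeneous_X ℂ 0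

theorem isHomogeneous_Yv : Yv.IsHomogeneous 1 := isHomogeneous_X ℂ 1

theorem isHomogeneous_Xv_pow_mul_Yv_pow (u v : ℕ) :
    (Xv ^ u * Yv ^ v : R2).IsHomogeneous (u + v) := by
  simpa only [one_mul] using (isHomogeneous_Xv.pow u).mul (isHomogeneous_Yv.pow v)

theorem euler_apply_of_isHomogeneous {p : R2} {w : ℕ} (hp : p.IsHomogeneous w) :
    euler p = w • p := by
  rw [← hp.sum_X_mul_pderiv, Fin.sum_univ_two]
  rfl

theorem eulerSub_apply_of_isHomogeneous (c : ℂ) {p : R2} {w : ℕ} (hp : p.IsHomogeneous w) :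
    eulerSub c p = (w - c : ℂ) • p := by
  rw [eulerSub, LinearMap.sub_apply, euler_apply_of_isHomogeneous hp, sub_smul,
    Nat.cast_smul_eq_nsmul]
  rfl

theorem coeff_euler (m : Fin 2 →₀ ℕ) (q : R2) :
    coeff m (euler q) = (m.degree : ℂ) * coeff m q := by
  induction q using MvPolynomial.induction_on' with
  | monomial u c =>
    rw [euler_apply_of_isHomogeneous (isHomogeneous_monomial c rfl), coeff_smul, coeff_monomial]
    split_ifs with h
    · rw [h, nsmul_eq_mul]
    · simp only [smul_zero, mul_zero]
  | add p q hp hq => rw [map_add, coeff_add, coeff_add, hp, hq, mul_add]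

/-- The operators of degree `d` with respect to the total degree: the eigenspace of the
commutator `A ↦ E ∘ A - A ∘ E` with the Euler operator for the eigenvalue `d`. -/
def degreeOps (d : ℤ) : Submodule ℂ (Module.End ℂ R2) :=
  Module.End.eigenspace (LinearMap.mulLeft ℂ euler - LinearMap.mulRight ℂ euler) (d : ℂ)

variable {A B : Module.End ℂ R2} {d e : ℤ}

theorem mem_degreeOps_iff : A ∈ degreeOps d ↔ euler * A = A * euler + (d : ℂ) • A := by
  rw [degreeOps, Module.End.mem_eigenspace_iff, LinearMap.sub_apply, LinearMap.mulLeft_apply,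
    LinearMap.mulRight_apply, sub_eq_iff_eq_add']

theorem mul_mem_degreeOps (hA : A ∈ degreeOps d) (hB : B ∈ degreeOps e) :
    A * B ∈ degreeOps (d + e) := by
  rw [mem_degreeOps_iff] at *
  rw [← mul_assoc, hA, add_mul, mul_assoc, hB, mul_add, smul_mul_assoc, mul_smul_comm,
    ← mul_assoc, Int.cast_add]
  module

theorem pow_mem_degreeOps (hA : A ∈ degreeOps d) (i : ℕ) : A ^ i ∈ degreeOps (i * d) := by
  induction i with
  | zero => simp [mem_degreeOps_iff]
  | succ i ih =>
    rw [pow_succ, Nat.cast_succ, add_mul, one_mul]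
    exact mul_mem_degreeOps ih hA

theorem Dx_mem_degreeOps : Dx ∈ degreeOps (-1) := by
  have hX : Dx Xv = 1 := pderiv_X_self 0
  have hY : Dx Yv = 0 := pderiv_X_of_ne one_ne_zero
  have h : Dx * euler = euler * Dx + Dx := by
    rw [euler, mul_add, ← mul_assoc, ← mul_assoc, Dx_mul_Mf, Dx_mul_Mf, hX, hY, Mf_one, Mf_zero,
      add_mul, add_mul, one_mul, zero_mul, mul_assoc _ Dx Dy, Dx_mul_Dy]
    noncomm_ring
  rw [mem_degreeOps_iff, h, Int.cast_neg, Int.cast_one]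
  module

theorem Dy_mem_degreeOps : Dy ∈ degreeOps (-1) := by
  have hX : Dy Xv = 0 := pderiv_X_of_ne zero_ne_one
  have hY : Dy Yv = 1 := pderiv_X_self 1
  have h : Dy * euler = euler * Dy + Dy := by
    rw [euler, mul_add, ← mul_assoc, ← mul_assoc, Dy_mul_Mf, Dy_mul_Mf, hX, hY, Mf_one, Mf_zero,
      add_mul, add_mul, one_mul, zero_mul, mul_assoc _ Dy Dx, ← Dx_mul_Dy]
    noncomm_ring
  rw [mem_degreeOps_iff, h, Int.cast_neg, Int.cast_one]
  module

theorem Mf_mem_degreeOps {g : R2} {w : ℕ} (hg : g.IsHomogeneous w) : Mf g ∈ degreeOps w := by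
  have hE : Mf (Xv * Dx g) + Mf (Yv * Dy g) = (w : ℂ) • Mf g := by
    rw [← Mf_add, ← Mf_smul, Nat.cast_smul_eq_nsmul, ← euler_apply_of_isHomogeneous hg]
    rfl
  rw [mem_degreeOps_iff, Int.cast_natCast, ← hE, euler, add_mul, mul_assoc, mul_assoc, Dx_mul_Mf,
    Dy_mul_Mf]
  simp only [mul_add, ← mul_assoc, ← Mf_mul, mul_comm g]
  abel

theorem diffMon_mem_degreeOps {g : R2} {w : ℕ} (hg : g.IsHomogeneous w) {i j : ℕ}
    (hd : (w : ℤ) = i + j + d) : diffMon g i j ∈ degreeOps d := by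
  rw [diffMon]
  convert mul_mem_degreeOps (mul_mem_degreeOps (Mf_mem_degreeOps hg)
    (pow_mem_degreeOps Dx_mem_degreeOps i)) (pow_mem_degreeOps Dy_mem_degreeOps j) using 2
  lia

theorem eulerSub_mul_of_mem_degreeOps (hA : A ∈ degreeOps d) (c : ℂ) :
    eulerSub c * A = A * eulerSub (c - d) := by
  rw [eulerSub, eulerSub, sub_mul, mem_degreeOps_iff.1 hA, mul_sub, smul_mul_assoc, one_mul,
    mul_smul_comm, mul_one]
  module

theorem coeff_apply_eq_zero_of_mem_degreeOps (hA : A ∈ degreeOps d) {p : R2} {w : ℕ}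
    (hp : p.IsHomogeneous w) {m : Fin 2 →₀ ℕ} (hm : (m.degree : ℤ) ≠ w + d) :
    coeff m (A p) = 0 := by
  have h := congr_arg (coeff m) (LinearMap.congr_fun (mem_degreeOps_iff.1 hA) p)
  rw [Module.End.mul_apply, coeff_euler, LinearMap.add_apply, Module.End.mul_apply,
    euler_apply_of_isHomogeneous hp, map_nsmul, LinearMap.smul_apply, coeff_add, coeff_smul,
    coeff_smul, nsmul_eq_mul, smul_eq_mul, ← add_mul] at h
  exact (mul_eq_mul_right_iff.1 h).resolve_left (mod_cast hm)

theorem diffMon_mul_eulerSub (g : R2) (i j : ℕ) (c : ℂ) :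
    diffMon g i j * eulerSub c =
      diffMon (Xv * g) (i + 1) j + diffMon (Yv * g) i (j + 1) + (i + j - c) • diffMon g i j := by
  have hD : Dx ^ i * Dy ^ j ∈ degreeOps (i * -1 + j * -1) :=
    mul_mem_degreeOps (pow_mem_degreeOps Dx_mem_degreeOps i) (pow_mem_degreeOps Dy_mem_degreeOps j)
  have hcomm : Dx ^ i * Dy ^ j * eulerSub c = eulerSub (c - (i + j)) * (Dx ^ i * Dy ^ j) := by
    rw [eulerSub_mul_of_mem_degreeOps hD]
    congr 2
    push_cast
    ring
  have hy : Dy * (Dx ^ i * Dy ^ j) = Dx ^ i * Dy ^ (j + 1) := by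
    rw [← mul_assoc, ← (commute_Dx_Dy.pow_left i).eq, mul_assoc, ← pow_succ']
  rw [diffMon, mul_assoc, mul_assoc, ← mul_assoc (Dx ^ i), hcomm, eulerSub, euler, sub_mul, add_mul,
    mul_assoc _ Dx, mul_assoc _ Dy, hy, ← mul_assoc Dx, ← pow_succ', smul_mul_assoc, one_mul,
    mul_sub, mul_add, mul_smul_comm]
  simp only [diffMon, mul_comm _ g, Mf_mul, mul_assoc]
  module

end Grading

section RightDivision

open Finset.HasAntidiagonal (antidiagonal mem_antidiagonal)

/-- The homogeneous operators of degree `d` and order less than `K`. The strict bound lets `K = 0`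
stand for the zero space. -/
def homOpsLT (d : ℤ) (K : ℕ) : Submodule ℂ (Module.End ℂ R2) :=
  Submodule.span ℂ {A | ∃ (g : R2) (w i j : ℕ),
    g.IsHomogeneous w ∧ i + j < K ∧ (w : ℤ) = i + j + d ∧ A = diffMon g i j}

variable {A : Module.End ℂ R2} {d : ℤ} {a r K : ℕ}

theorem diffMon_mem_homOpsLT {g : R2} {w i j : ℕ} (hg : g.IsHomogeneous w) (hK : i + j < K)
    (hd : (w : ℤ) = i + j + d) : diffMon g i j ∈ homOpsLT d K :=
  Submodule.subset_span ⟨g, w, i, j, hg, hK, hd, rfl⟩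

theorem homOpsLT_le_degreeOps : homOpsLT d K ≤ degreeOps d := by
  refine Submodule.span_le.2 ?_
  rintro _ ⟨g, w, i, j, hg, -, hd, rfl⟩
  exact diffMon_mem_degreeOps hg hd

theorem homOpsLT_zero : homOpsLT d 0 = ⊥ := by
  refine (Submodule.span_eq_bot).2 ?_
  rintro _ ⟨g, w, i, j, -, hK, -⟩
  exact absurd hK (Nat.not_lt_zero _)

/- On polynomials of degree `a` the Euler relation `(a - i - j) D_x^i D_y^j =
x D_x^{i+1} D_y^j + y D_x^i D_y^{j+1}` raises the order of every term to `K ≤ a`. -/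
theorem diffMon_mem_map_mulRight_sup_diffOps (hKa : K ≤ a) {c i j : ℕ} (hc : i + j + c = K)
    {g : R2} {w : ℕ} (hg : g.IsHomogeneous w) (hd : (w : ℤ) = i + j + d) :
    diffMon g i j ∈ (homOpsLT d K).map (LinearMap.mulRight ℂ (eulerSub a)) ⊔
      diffOps (antidiagonal K) := by
  induction c generalizing g w i j with
  | zero => exact Submodule.mem_sup_right <| diffMon_mem_diffOps (mem_antidiagonal.2 (by lia)) g
  | succ c ih =>
    have hx := ih (i := i + 1) (j := j) (by lia) (isHomogeneous_Xv.mul hg) (by push_cast; lia)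
    have hy := ih (i := i) (j := j + 1) (by lia) (isHomogeneous_Yv.mul hg) (by push_cast; lia)
    have hdiv : diffMon g i j * eulerSub a ∈
        (homOpsLT d K).map (LinearMap.mulRight ℂ (eulerSub a)) :=
      Submodule.mem_map_of_mem (diffMon_mem_homOpsLT hg (by lia) hd)
    have hne : (a - i - j : ℂ) ≠ 0 := by
      rw [sub_sub, sub_ne_zero]
      exact_mod_cast (show a ≠ i + j by lia)
    have hraise : diffMon g i j = (a - i - j : ℂ)⁻¹ • (diffMon (Xv * g) (i + 1) j +
        diffMon (Yv * g) i (j + 1) - diffMon g i j * eulerSub a) := by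
      rw [eq_inv_smul_iff₀ hne, diffMon_mul_eulerSub]
      module
    rw [hraise]
    exact Submodule.smul_mem _ _ (sub_mem (add_mem hx hy) (Submodule.mem_sup_left hdiv))

theorem homOpsLT_succ_le (hKa : K ≤ a) :
    homOpsLT d (K + 1) ≤ (homOpsLT d K).map (LinearMap.mulRight ℂ (eulerSub a)) ⊔
      diffOps (antidiagonal K) := by
  refine Submodule.span_le.2 ?_
  rintro _ ⟨g, w, i, j, hg, hK, hd, rfl⟩
  exact diffMon_mem_map_mulRight_sup_diffOps hKa
    (Nat.add_sub_cancel' (Nat.lt_succ_iff.1 hK)) hg hd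

theorem diffOp_antidiagonal_apply_monomial {f : ℕ × ℕ → R2} {i j : ℕ} (hij : i + j = K)
    (hf : ∀ i' < i, ∀ j', i' + j' = K → f (i', j') = 0) (v : ℕ) :
    diffOp (antidiagonal K) f (Xv ^ i * Yv ^ v) = diffMon (f (i, j)) i j (Xv ^ i * Yv ^ v) := by
  rw [diffOp, LinearMap.sum_apply, Finset.sum_eq_single_of_mem (i, j) (mem_antidiagonal.2 hij)]
  · rfl
  rintro ⟨i', j'⟩ hij' hne
  rw [mem_antidiagonal] at hij'
  rcases lt_or_ge i' i with hlt | hge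
  · rw [hf i' hlt j' hij', Mf_zero, zero_mul, zero_mul, LinearMap.zero_apply]
  · have hlt : i < i' := hge.lt_of_ne fun h => hne (by rw [Prod.mk.injEq]; lia)
    rw [← diffMon, diffMon_apply_monomial, Nat.descFactorial_of_lt hlt, zero_mul, zero_smul]

theorem eq_zero_of_mem_diffOps_antidiagonal (hKa : K ≤ a)
    (hA : A ∈ diffOps (antidiagonal K))
    (hker : homogeneousSubmodule (Fin 2) ℂ a ≤ LinearMap.ker A) : A = 0 := by
  obtain ⟨f, rfl⟩ := hA
  have hf : ∀ i j, i + j = K → f (i, j) = 0 := fun i => by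
    induction i using Nat.strong_induction_on with
    | _ i ih =>
      intro j hij
      have hhom := isHomogeneous_Xv_pow_mul_Yv_pow i (a - i)
      rw [Nat.add_sub_cancel' (by lia)] at hhom
      have hzero := hker hhom
      rw [LinearMap.mem_ker, diffOp_antidiagonal_apply_monomial hij ih,
        diffMon_apply_monomial] at hzero
      have hXY : (Xv ^ (i - i) * Yv ^ (a - i - j) : R2) ≠ 0 :=
        mul_ne_zero (pow_ne_zero _ (X_ne_zero 0)) (pow_ne_zero _ (X_ne_zero 1))
      have hfact : i.descFactorial i * (a - i).descFactorial j ≠ 0 := by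
        simp only [ne_eq, mul_eq_zero, Nat.descFactorial_eq_zero_iff_lt]
        lia
      exact (mul_eq_zero.1 ((smul_eq_zero.1 hzero).resolve_left hfact)).resolve_right hXY
  refine Finset.sum_eq_zero fun ij hij => ?_
  rw [hf _ _ (mem_antidiagonal.1 hij), Mf_zero, zero_mul, zero_mul]

theorem exists_eq_mul_eulerSub (hKa : K ≤ a + 1) (hA : A ∈ homOpsLT d K)
    (hker : homogeneousSubmodule (Fin 2) ℂ a ≤ LinearMap.ker A) :
    ∃ B ∈ homOpsLT d (K - 1), A = B * eulerSub a := by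
  cases K with
  | zero =>
    rw [homOpsLT_zero, Submodule.mem_bot] at hA
    exact ⟨0, zero_mem _, by rw [hA, zero_mul]⟩
  | succ K =>
    obtain ⟨_, ⟨B, hB, rfl⟩, C, hC, rfl⟩ :=
      Submodule.mem_sup.1 (homOpsLT_succ_le (Nat.succ_le_succ_iff.1 hKa) hA)
    have hC0 : C = 0 := by
      refine eq_zero_of_mem_diffOps_antidiagonal (Nat.succ_le_succ_iff.1 hKa) hC fun p hp => ?_
      have h := hker hp
      rw [LinearMap.mem_ker, LinearMap.add_apply, LinearMap.mulRight_apply, Module.End.mul_apply,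
        eulerSub_apply_of_isHomogeneous _ hp, sub_self, zero_smul, map_zero, zero_add] at h
      exact h
    exact ⟨B, hB, by rw [hC0, add_zero, LinearMap.mulRight_apply]⟩

/-- The product `(E - a + r - 1) ⋯ (E - a + 1)(E - a)`, which vanishes on homogeneous polynomials
of degree `w` for `a - r < w ≤ a`. -/
def eulerFalling (a : ℂ) : ℕ → Module.End ℂ R2
  | 0 => 1
  | r + 1 => eulerSub (a - r) * eulerFalling a r

theorem eulerFalling_apply_of_isHomogeneous (c : ℂ) (r : ℕ) {p : R2} {w : ℕ}
    (hp : p.IsHomogeneous w) :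
    eulerFalling c r p = (∏ l ∈ Finset.range r, (w - c + l : ℂ)) • p := by
  induction r with
  | zero => simp [eulerFalling]
  | succ r ih =>
    rw [eulerFalling, Module.End.mul_apply, ih, map_smul, eulerSub_apply_of_isHomogeneous _ hp,
      smul_smul, Finset.prod_range_succ, sub_sub_eq_add_sub, add_sub_right_comm]

theorem eulerFalling_mul_of_mem_degreeOps (hA : A ∈ degreeOps d) (c : ℂ) (r : ℕ) :
    eulerFalling c r * A = A * eulerFalling (c - d) r := by
  induction r with
  | zero => simp [eulerFalling]
  | succ r ih =>
    rw [eulerFalling, mul_assoc, ih, ← mul_assoc, eulerSub_mul_of_mem_degreeOps hA, mul_assoc,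
      eulerFalling, sub_right_comm]

theorem exists_eq_mul_eulerFalling (hKa : K ≤ a + 1) (hra : r ≤ a + 1) (hA : A ∈ homOpsLT d K)
    (hker : ∀ w ≤ a, a < w + r → homogeneousSubmodule (Fin 2) ℂ w ≤ LinearMap.ker A) :
    ∃ B ∈ homOpsLT d (K - r), A = B * eulerFalling a r := by
  induction r with
  | zero => exact ⟨A, hA, by rw [eulerFalling, mul_one]⟩
  | succ r ih =>
    obtain ⟨B, hB, rfl⟩ := ih (by lia) fun w hw hwr => hker w hw (by lia)
    have hra' : r ≤ a := Nat.succ_le_succ_iff.1 hra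
    have hkerB : homogeneousSubmodule (Fin 2) ℂ (a - r) ≤ LinearMap.ker B := fun p hp => by
      have h := hker (a - r) (Nat.sub_le a r) (by lia) hp
      have hne : ∏ l ∈ Finset.range r, ((a - r : ℕ) - a + l : ℂ) ≠ 0 := by
        refine Finset.prod_ne_zero_iff.2 fun l hl => ?_
        rw [Nat.cast_sub hra', sub_sub_cancel_left, neg_add_eq_sub, sub_ne_zero]
        exact_mod_cast (Finset.mem_range.1 hl).ne
      rw [LinearMap.mem_ker, Module.End.mul_apply, eulerFalling_apply_of_isHomogeneous _ _ hp,
        map_smul] at h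
      exact (smul_eq_zero.1 h).resolve_left hne
    obtain ⟨C, hC, rfl⟩ := exists_eq_mul_eulerSub (by lia) hB hkerB
    refine ⟨C, hC, ?_⟩
    rw [mul_assoc, eulerFalling, Nat.cast_sub hra']

end RightDivision

section TriangularModules

theorem monomial_one_eq (m : Fin 2 →₀ ℕ) : monomial m (1 : ℂ) = Xv ^ m 0 * Yv ^ m 1 := by
  rw [monomial_eq, C_1, one_mul, Finsupp.prod_fintype _ _ fun _ => pow_zero _, Fin.prod_univ_two]
  rfl

theorem Tmod_eq_restrictTotalDegree (a : ℕ) : Tmod a = restrictTotalDegree (Fin 2) ℂ a := by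
  rw [Tmod, restrictTotalDegree, restrictSupport_eq_span]
  congr 1
  ext P
  constructor
  · rintro ⟨i, j, hij, rfl⟩
    refine ⟨Finsupp.single 0 i + Finsupp.single 1 j, ?_, by simp [monomial_one_eq]⟩
    simpa [Finsupp.sum_fintype] using hij
  · rintro ⟨m, hm, rfl⟩
    refine ⟨m 0, m 1, ?_, monomial_one_eq m⟩
    simpa [Finsupp.sum_fintype] using hm

variable {A : Module.End ℂ R2} {a b w k : ℕ} {p : R2}

theorem mem_Tmod_of_isHomogeneous (hp : p.IsHomogeneous w) (hw : w ≤ a) : p ∈ Tmod a := by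
  rw [Tmod_eq_restrictTotalDegree, mem_restrictTotalDegree]
  exact hp.totalDegree_le.trans hw

theorem coeff_eq_zero_of_mem_Tmod (hp : p ∈ Tmod a) {m : Fin 2 →₀ ℕ} (hm : a < m.degree) :
    coeff m p = 0 := by
  rw [Tmod_eq_restrictTotalDegree, mem_restrictTotalDegree] at hp
  exact coeff_eq_zero_of_totalDegree_lt (hp.trans_lt hm)

theorem ordLE_le_iSup_homOpsLT : ordLE k ≤ ⨆ d, homOpsLT d (k + 1) := by
  refine ordLE_le fun g i j hij => ?_
  rw [← sum_homogeneousComponent g, diffMon_sum]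
  refine sum_mem fun w _ => Submodule.mem_iSup_of_mem (w - i - j : ℤ) ?_
  exact diffMon_mem_homOpsLT (homogeneousComponent_isHomogeneous w g) (by lia) (by ring)

theorem apply_eq_zero_of_sum_mem_Tmod {F : ℤ →₀ Module.End ℂ R2} (hF : ∀ d, F d ∈ degreeOps d)
    (hp : p.IsHomogeneous w) (hsum : (F.sum fun _ A => A) p ∈ Tmod b) {d : ℤ} (hd : b < w + d) :
    F d p = 0 := by
  ext m
  rw [coeff_zero]
  by_cases hm : (m.degree : ℤ) = w + d
  · rw [← coeff_eq_zero_of_mem_Tmod hsum (m := m) (by lia), Finsupp.sum, LinearMap.sum_apply,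
      coeff_sum, Finset.sum_eq_single d]
    · exact fun e _ hed => coeff_apply_eq_zero_of_mem_degreeOps (hF e) hp (by lia)
    · intro hd
      rw [Finsupp.notMem_support_iff.1 hd, LinearMap.zero_apply, coeff_zero]
  · exact coeff_apply_eq_zero_of_mem_degreeOps (hF d) hp hm

/-- The normal-ordered operators `M_g ∘ D_x^i ∘ D_y^j ∘ (E - a + r - 1) ⋯ (E - a)` of order `m`,
where `deg g` is so small that they map `Tmod a` to `Tmod b`. -/
def triangularGens (a b m : ℕ) : Set (Module.End ℂ R2) :=
  {A | ∃ (g : R2) (w i j r : ℕ), g.IsHomogeneous w ∧ i + j + r = m ∧ w + a ≤ m + b ∧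
    A = diffMon g i j * eulerFalling a r}

/-- The span of the `triangularGens a b m` with `m ≤ k`: the normal form of the operators of order
at most `k` that map `Tmod a` to `Tmod b`. -/
def triangularOps (a b k : ℕ) : Submodule ℂ (Module.End ℂ R2) :=
  Submodule.span ℂ {A | ∃ m ≤ k, A ∈ triangularGens a b m}

theorem mul_eulerFalling_mem_triangularOps {B : Module.End ℂ R2} {d : ℤ} {r K : ℕ}
    (hB : B ∈ homOpsLT d K) (hK : K + r ≤ k + 1) (hd : d + a ≤ r + b) :
    B * eulerFalling a r ∈ triangularOps a b k := by
  have hle : homOpsLT d K ≤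
      (triangularOps a b k).comap (LinearMap.mulRight ℂ (eulerFalling a r)) := by
    refine Submodule.span_le.2 ?_
    rintro _ ⟨g, w, i, j, hg, hij, hw, rfl⟩
    rw [SetLike.mem_coe, Submodule.mem_comap, LinearMap.mulRight_apply]
    exact Submodule.subset_span ⟨i + j + r, by lia, g, w, i, j, r, hg, rfl, by lia, rfl⟩
  exact Submodule.mem_comap.1 (hle hB)

theorem mem_triangularOps_of_mem_homOpsLT {d : ℤ} (hka : k ≤ a) (hA : A ∈ homOpsLT d (k + 1))
    (hker : ∀ w ≤ a, (b : ℤ) < w + d → homogeneousSubmodule (Fin 2) ℂ w ≤ LinearMap.ker A) :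
    A ∈ triangularOps a b k := by
  by_cases hd : d + a ≤ a + 1 + b
  · obtain ⟨B, hB, rfl⟩ := exists_eq_mul_eulerFalling (a := a) (r := (a + d - b).toNat) (by lia)
      (by lia) hA fun w hw hwr => hker w hw (by lia)
    by_cases hr : (a + d - b).toNat ≤ k + 1
    · exact mul_eulerFalling_mem_triangularOps hB (by lia) (by lia)
    · rw [show k + 1 - (a + d - b).toNat = 0 by lia, homOpsLT_zero, Submodule.mem_bot] at hB
      rw [hB, zero_mul]
      exact zero_mem _
  · obtain ⟨B, hB, rfl⟩ := exists_eq_mul_eulerFalling (a := a) (r := a + 1) (by lia) le_rfl hA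
      fun w hw _ => hker w hw (by lia)
    rw [show k + 1 - (a + 1) = 0 by lia, homOpsLT_zero, Submodule.mem_bot] at hB
    rw [hB, zero_mul]
    exact zero_mem _

theorem mem_triangularOps_of_mapsTo (hka : k ≤ a) (hA : A ∈ ordLE k)
    (hmaps : ∀ p ∈ Tmod a, A p ∈ Tmod b) : A ∈ triangularOps a b k := by
  obtain ⟨F, hF, rfl⟩ := (Submodule.mem_iSup_iff_exists_finsupp _ _).1 (ordLE_le_iSup_homOpsLT hA)
  refine sum_mem fun d _ => mem_triangularOps_of_mem_homOpsLT hka (hF d) fun w hw hd p hp => ?_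
  exact apply_eq_zero_of_sum_mem_Tmod (fun e => homOpsLT_le_degreeOps (hF e)) hp
    (hmaps p (mem_Tmod_of_isHomogeneous hp hw)) hd

end TriangularModules

section Generation

/-- The `𝔰𝔩₃` generators `J¹(c), …, J⁸(c)`, indexed from `0`. -/
def sl3Gen (c : ℂ) : Fin 8 → Module.End ℂ R2 := ![J1 c, J2 c, J3, J4, J5, J6, J7 c, J8 c]

/-- An increasing filtration of (a part of) the differential operators which left multiplication by
the `𝔰𝔩₃` generators raises by one. In the application `P m` is the set of operators whose
placement in a fixed matrix entry is generated in order at most `m`. -/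
structure Sl3Stable (b : ℂ) (P : ℕ → Submodule ℂ (Module.End ℂ R2)) : Prop where
  mono : Monotone P
  mul_mem : ∀ m i, ∀ A ∈ P m, sl3Gen b i * A ∈ P (m + 1)

variable {S : Submodule ℂ (Module.End ℂ R2)} {B : Module.End ℂ R2} {p : R2} {d : ℕ} {c : ℂ}

theorem Mf_mul_mem_of_mem_Tmod (h : ∀ i j, i + j ≤ d → Mf (Xv ^ i * Yv ^ j) * B ∈ S)
    (hp : p ∈ Tmod d) : Mf p * B ∈ S := by
  have hle : Tmod d ≤ S.comap (LinearMap.mulRight ℂ B ∘ₗ LinearMap.mul ℂ R2) := by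
    refine Submodule.span_le.2 ?_
    rintro _ ⟨i, j, hij, rfl⟩
    exact h i j hij
  exact hle hp

theorem Mf_mul_mem_of_mem_Tmod_one (h1 : B ∈ S) (hx : Mf Xv * B ∈ S) (hy : Mf Yv * B ∈ S)
    (hp : p ∈ Tmod 1) : Mf p * B ∈ S := by
  refine Mf_mul_mem_of_mem_Tmod (fun i j hij => ?_) hp
  obtain ⟨rfl, rfl⟩ | ⟨rfl, rfl⟩ | ⟨rfl, rfl⟩ :
    (i = 0 ∧ j = 0) ∨ (i = 1 ∧ j = 0) ∨ (i = 0 ∧ j = 1) := by lia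
  · simpa only [pow_zero, mul_one, Mf_one, one_mul] using h1
  · simpa only [pow_zero, pow_one, mul_one] using hx
  · simpa only [pow_zero, pow_one, one_mul] using hy

theorem J1_eq_Mf_mul_eulerSub : J1 c = Mf Xv * eulerSub c := by
  simp only [J1, eulerSub, euler, mul_sub, mul_add, ← mul_assoc, Mf_mul, mul_smul_comm, mul_one, sq]

theorem J2_eq_Mf_mul_eulerSub : J2 c = Mf Yv * eulerSub c := by
  simp only [J2, eulerSub, euler, mul_sub, mul_add, ← mul_assoc, Mf_mul, mul_smul_comm, mul_one, sq,
    mul_comm Xv Yv]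

theorem sl3Gen_mem_span (c : ℂ) (i : Fin 8) :
    sl3Gen c i ∈ Submodule.span ℂ (insert 1 (Set.range (sl3Gen c))) :=
  Submodule.subset_span (Or.inr ⟨i, rfl⟩)

theorem smul_one_mem_span_sl3Gen (c z : ℂ) :
    z • 1 ∈ Submodule.span ℂ (insert 1 (Set.range (sl3Gen c))) :=
  Submodule.smul_mem _ z (Submodule.subset_span (Or.inl rfl))

theorem Mf_mul_Dx_mem_span_sl3Gen (hp : p ∈ Tmod 1) :
    Mf p * Dx ∈ Submodule.span ℂ (insert 1 (Set.range (sl3Gen c))) := by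
  refine Mf_mul_mem_of_mem_Tmod_one (sl3Gen_mem_span c 3) ?_ (sl3Gen_mem_span c 2) hp
  rw [← sub_add_cancel (Mf Xv * Dx) ((c / 3) • 1)]
  exact add_mem (sl3Gen_mem_span c 6) (smul_one_mem_span_sl3Gen c _)

theorem Mf_mul_Dy_mem_span_sl3Gen (hp : p ∈ Tmod 1) :
    Mf p * Dy ∈ Submodule.span ℂ (insert 1 (Set.range (sl3Gen c))) := by
  refine Mf_mul_mem_of_mem_Tmod_one (sl3Gen_mem_span c 4) (sl3Gen_mem_span c 5) ?_ hp
  rw [← sub_add_cancel (Mf Yv * Dy) ((c / 3) • 1)]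
  exact add_mem (sl3Gen_mem_span c 7) (smul_one_mem_span_sl3Gen c _)

theorem Mf_mul_eulerSub_mem_span_sl3Gen (hp : p ∈ Tmod 1) :
    Mf p * eulerSub c ∈ Submodule.span ℂ (insert 1 (Set.range (sl3Gen c))) := by
  refine Mf_mul_mem_of_mem_Tmod_one ?_ (J1_eq_Mf_mul_eulerSub ▸ sl3Gen_mem_span c 0)
    (J2_eq_Mf_mul_eulerSub ▸ sl3Gen_mem_span c 1) hp
  have heq : eulerSub c = J7 c + J8 c - (c / 3) • 1 := by
    rw [eulerSub, euler, J7, J8]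
    module
  rw [heq]
  exact sub_mem (add_mem (sl3Gen_mem_span c 6) (sl3Gen_mem_span c 7)) (smul_one_mem_span_sl3Gen c _)

theorem exists_eq_C_of_isHomogeneous_zero (hp : p.IsHomogeneous 0) : ∃ z, p = C z :=
  ⟨_, totalDegree_eq_zero_iff_eq_C.1 (Nat.le_zero.1 hp.totalDegree_le)⟩

theorem exists_isHomogeneous_mul_pderiv {h g : R2} {e w : ℕ} (hh : h.IsHomogeneous e) (he : e ≤ 1)
    (hg : g.IsHomogeneous w) (l : Fin 2) : ∃ v ≤ w, (h * pderiv l g).IsHomogeneous v := by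
  rcases w with - | w
  · obtain ⟨z, rfl⟩ := exists_eq_C_of_isHomogeneous_zero hg
    exact ⟨0, le_rfl, by simpa using isHomogeneous_zero _ _ _⟩
  · exact ⟨e + w, by lia, hh.mul (by simpa using hg.pderiv (i := l))⟩

theorem exists_eq_Xv_mul_add_Yv_mul {g : R2} {w : ℕ} (hg : g.IsHomogeneous (w + 1)) :
    ∃ g₁ g₂ : R2, g₁.IsHomogeneous w ∧ g₂.IsHomogeneous w ∧ g = Xv * g₁ + Yv * g₂ := by
  have hpderiv (l : Fin 2) : (C ((w + 1 : ℂ)⁻¹) * pderiv l g).IsHomogeneous w := by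
    simpa using (isHomogeneous_C (Fin 2) ((w + 1 : ℂ)⁻¹)).mul (hg.pderiv (i := l))
  refine ⟨_, _, hpderiv 0, hpderiv 1, ?_⟩
  have heuler : Xv * pderiv 0 g + Yv * pderiv 1 g = ((w + 1 : ℕ) : ℂ) • g := by
    rw [Nat.cast_smul_eq_nsmul]
    exact euler_apply_of_isHomogeneous hg
  have hw : (w + 1 : ℂ) ≠ 0 := by exact_mod_cast w.succ_ne_zero
  rw [mul_left_comm, mul_left_comm Yv, ← mul_add, heuler, C_mul', smul_smul, Nat.cast_succ,
    inv_mul_cancel₀ hw, one_smul]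

theorem triangularGens_eq_empty {a b m : ℕ} (hm : m < a - b) : triangularGens a b m = ∅ := by
  refine Set.eq_empty_of_forall_notMem ?_
  rintro _ ⟨g, w, i, j, r, -, -, hw, -⟩
  lia

theorem triangularGens_zero_subset {a b : ℕ}
    (h : ∀ i j, i + j ≤ b - a → Mf (Xv ^ i * Yv ^ j) ∈ S) : triangularGens a b 0 ⊆ S := by
  rintro _ ⟨g, w, i, j, r, hg, hijr, hw, rfl⟩
  obtain ⟨rfl, rfl, rfl⟩ : i = 0 ∧ j = 0 ∧ r = 0 := by lia
  rw [diffMon_zero_zero]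
  exact Mf_mul_mem_of_mem_Tmod
    (fun i j hij => by simpa only [eulerFalling, mul_one] using h i j hij)
    (mem_Tmod_of_isHomogeneous hg (by lia))

theorem triangularGens_sub_subset {a m : ℕ} (hm : m ≤ a)
    (h : ∀ i j r, i + j + r = m → diffMon 1 i j * eulerFalling a r ∈ S) :
    triangularGens a (a - m) m ⊆ S := by
  rintro _ ⟨g, w, i, j, r, hg, hijr, hw, rfl⟩
  obtain rfl : w = 0 := by lia
  obtain ⟨z, rfl⟩ := exists_eq_C_of_isHomogeneous_zero hg
  rw [C_eq_smul_one, diffMon_smul, smul_mul_assoc]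
  exact S.smul_mem z (h i j r hijr)

namespace Sl3Stable

variable {a b m i j r e w : ℕ} {P : ℕ → Submodule ℂ (Module.End ℂ R2)} {A L : Module.End ℂ R2}
  {h g : R2}

theorem mul_mem_of_mem_span (hP : Sl3Stable c P)
    (hL : L ∈ Submodule.span ℂ (insert 1 (Set.range (sl3Gen c)))) (hA : A ∈ P m) :
    L * A ∈ P (m + 1) := by
  have hle : Submodule.span ℂ (insert 1 (Set.range (sl3Gen c))) ≤
      (P (m + 1)).comap (LinearMap.mulRight ℂ A) := by
    refine Submodule.span_le.2 ?_
    rintro _ (rfl | ⟨i, rfl⟩)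
    · simpa using hP.mono m.le_succ hA
    · exact hP.mul_mem m i A hA
  exact Submodule.mem_comap.1 (hle hL)

theorem diffMon_succ_left_mem (hP : Sl3Stable b P) (hm : triangularGens a b m ⊆ P m)
    (hh : h.IsHomogeneous e) (he : e ≤ 1) (hg : g.IsHomogeneous w) (hw : w + a ≤ m + b)
    (hijr : i + j + r = m) :
    diffMon (h * g) (i + 1) j * eulerFalling a r ∈ P (m + 1) := by
  obtain ⟨v, hv, hhg⟩ := exists_isHomogeneous_mul_pderiv hh he hg 0
  have hsplit : diffMon (h * g) (i + 1) j =
      Mf h * Dx * diffMon g i j - diffMon (h * pderiv 0 g) i j := by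
    rw [mul_assoc, Dx_mul_diffMon, mul_add, Mf_mul_diffMon, Mf_mul_diffMon, eq_sub_iff_add_eq]
    rfl
  rw [hsplit, sub_mul, mul_assoc]
  refine sub_mem (hP.mul_mem_of_mem_span
    (Mf_mul_Dx_mem_span_sl3Gen (mem_Tmod_of_isHomogeneous hh he)) (hm ?_))
    (hP.mono m.le_succ (hm ?_))
  · exact ⟨g, w, i, j, r, hg, hijr, hw, rfl⟩
  · exact ⟨_, v, i, j, r, hhg, hijr, by lia, rfl⟩

theorem diffMon_succ_right_mem (hP : Sl3Stable b P) (hm : triangularGens a b m ⊆ P m)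
    (hh : h.IsHomogeneous e) (he : e ≤ 1) (hg : g.IsHomogeneous w) (hw : w + a ≤ m + b)
    (hijr : i + j + r = m) :
    diffMon (h * g) i (j + 1) * eulerFalling a r ∈ P (m + 1) := by
  obtain ⟨v, hv, hhg⟩ := exists_isHomogeneous_mul_pderiv hh he hg 1
  have hsplit : diffMon (h * g) i (j + 1) =
      Mf h * Dy * diffMon g i j - diffMon (h * pderiv 1 g) i j := by
    rw [mul_assoc, Dy_mul_diffMon, mul_add, Mf_mul_diffMon, Mf_mul_diffMon, eq_sub_iff_add_eq]
    rfl
  rw [hsplit, sub_mul, mul_assoc]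
  refine sub_mem (hP.mul_mem_of_mem_span
    (Mf_mul_Dy_mem_span_sl3Gen (mem_Tmod_of_isHomogeneous hh he)) (hm ?_))
    (hP.mono m.le_succ (hm ?_))
  · exact ⟨g, w, i, j, r, hg, hijr, hw, rfl⟩
  · exact ⟨_, v, i, j, r, hhg, hijr, by lia, rfl⟩

theorem Mf_mul_eulerFalling_succ_mem (hP : Sl3Stable b P) (hm : triangularGens a b m ⊆ P m)
    (hh : h.IsHomogeneous e) (he : e ≤ 1) (hg : g.IsHomogeneous w) (hw : w + a ≤ m + b) :
    Mf (h * g) * eulerFalling a (m + 1) ∈ P (m + 1) := by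
  have hsplit : Mf (h * g) * eulerFalling a (m + 1) =
      Mf h * eulerSub b * (Mf g * eulerFalling a m) +
        ((m + b : ℂ) - (w + a)) • (Mf (h * g) * eulerFalling a m) := by
    have hcomm : eulerSub (b : ℂ) * Mf g = Mf g * eulerSub (b - w) := by
      simpa using eulerSub_mul_of_mem_degreeOps (Mf_mem_degreeOps hg) (b : ℂ)
    have hshift : eulerSub (a - m : ℂ) = eulerSub (b - w : ℂ) + ((m + b : ℂ) - (w + a)) • 1 := by
      rw [eulerSub, eulerSub]
      module
    rw [mul_assoc, ← mul_assoc (eulerSub _), hcomm, Mf_mul, eulerFalling, hshift]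
    simp only [add_mul, mul_add, mul_assoc, smul_mul_assoc, mul_smul_comm, one_mul]
  rw [hsplit]
  refine add_mem (hP.mul_mem_of_mem_span
    (Mf_mul_eulerSub_mem_span_sl3Gen (mem_Tmod_of_isHomogeneous hh he))
    (hm ⟨g, w, 0, 0, m, hg, by lia, hw, by rw [diffMon_zero_zero]⟩)) ?_
  rcases hw.eq_or_lt with heq | hlt
  · rw [show (m + b : ℂ) - (w + a) = 0 by rw [sub_eq_zero]; exact_mod_cast heq.symm, zero_smul]
    exact zero_mem _
  · exact (P _).smul_mem _ (hP.mono m.le_succ (hm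
      ⟨h * g, e + w, 0, 0, m, hh.mul hg, by lia, by lia, by rw [diffMon_zero_zero]⟩))

theorem diffMon_mul_eulerFalling_mem (hP : Sl3Stable b P) (hm : triangularGens a b m ⊆ P m)
    (hh : h.IsHomogeneous e) (he : e ≤ 1) (hg : g.IsHomogeneous w) (hw : w + a ≤ m + b)
    (hijr : i + j + r = m + 1) :
    diffMon (h * g) i j * eulerFalling a r ∈ P (m + 1) := by
  rcases i with - | i
  · rcases j with - | j
    · obtain rfl : r = m + 1 := by lia
      rw [diffMon_zero_zero]
      exact hP.Mf_mul_eulerFalling_succ_mem hm hh he hg hw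
    · exact hP.diffMon_succ_right_mem hm hh he hg hw (by lia)
  · exact hP.diffMon_succ_left_mem hm hh he hg hw (by lia)

theorem triangularGens_succ_subset (hP : Sl3Stable b P) (hm : triangularGens a b m ⊆ P m)
    (hab : a ≤ m + b) : triangularGens a b (m + 1) ⊆ P (m + 1) := by
  rintro _ ⟨g, w, i, j, r, hg, hijr, hw, rfl⟩
  rw [SetLike.mem_coe]
  by_cases hwm : w + a ≤ m + b
  · simpa only [one_mul] using
      hP.diffMon_mul_eulerFalling_mem hm (isHomogeneous_one _ _) zero_le_one hg hwm hijr
  · obtain ⟨w, rfl⟩ : ∃ v, w = v + 1 := Nat.exists_eq_succ_of_ne_zero (by lia)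
    obtain ⟨g₁, g₂, hg₁, hg₂, rfl⟩ := exists_eq_Xv_mul_add_Yv_mul hg
    rw [diffMon_add, add_mul]
    exact add_mem
      (hP.diffMon_mul_eulerFalling_mem hm isHomogeneous_Xv le_rfl hg₁ (by lia) hijr)
      (hP.diffMon_mul_eulerFalling_mem hm isHomogeneous_Yv le_rfl hg₂ (by lia) hijr)

theorem triangularOps_le (hP : Sl3Stable b P)
    (hbase : triangularGens a b (a - b) ⊆ P (a - b)) (k : ℕ) :
    triangularOps a b k ≤ P k := by
  have hgens (m : ℕ) : triangularGens a b m ⊆ P m := by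
    rcases lt_or_ge m (a - b) with hlt | hge
    · rw [triangularGens_eq_empty hlt]
      exact Set.empty_subset _
    · induction m, hge using Nat.le_induction with
      | base => exact hbase
      | succ m hge ih => exact hP.triangularGens_succ_subset ih (by lia)
  refine Submodule.span_le.2 ?_
  rintro A ⟨m, hmk, hA⟩
  exact hP.mono hmk (hgens m hA)

theorem mem_of_mapsTo (hP : Sl3Stable b P)
    (hbase : triangularGens a b (a - b) ⊆ P (a - b)) {k : ℕ}
    (hA : A ∈ ordLE (min k a)) (hmaps : ∀ p ∈ Tmod a, A p ∈ Tmod b) : A ∈ P k :=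
  hP.mono (min_le_left k a) (hP.triangularOps_le hbase _
    (mem_triangularOps_of_mapsTo (min_le_right k a) hA hmaps))

end Sl3Stable

end Generation

section MatrixOperators

/-- The placement `A ↦ ι ∘ A ∘ π` of a scalar operator in a matrix entry, where `ι` is one of the
injections `R → R × R` and `π` one of the projections `R × R → R`. -/
def entry (ι : R2 →ₗ[ℂ] V2) (π : V2 →ₗ[ℂ] R2) : Module.End ℂ R2 →ₗ[ℂ] Module.End ℂ V2 :=
  LinearMap.lcomp ℂ V2 π ∘ₗ LinearMap.compRight ℂ ι

open LinearMap (inl inr fst snd)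

theorem entry_apply (ι : R2 →ₗ[ℂ] V2) (π : V2 →ₗ[ℂ] R2) (A : Module.End ℂ R2) (v : V2) :
    entry ι π A v = ι (A (π v)) := rfl

theorem matOp_apply (A B C D : Module.End ℂ R2) (u v : R2) :
    matOp A B C D (u, v) = (A u + B v, C u + D v) := rfl

theorem matOp_eq_sum_entry (A B C D : Module.End ℂ R2) :
    matOp A B C D = entry (inl ℂ R2 R2) (fst ℂ R2 R2) A + entry (inl ℂ R2 R2) (snd ℂ R2 R2) B +
      entry (inr ℂ R2 R2) (fst ℂ R2 R2) C + entry (inr ℂ R2 R2) (snd ℂ R2 R2) D := by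
  refine LinearMap.ext fun ⟨u, v⟩ => ?_
  simp [matOp_apply, entry_apply]

theorem dg_mul_entry_inl (A B L : Module.End ℂ R2) (π : V2 →ₗ[ℂ] R2) :
    dg A B * entry (inl ℂ R2 R2) π L = entry (inl ℂ R2 R2) π (A * L) := by
  refine LinearMap.ext fun v => ?_
  simp [dg, matOp_apply, entry_apply]

theorem dg_mul_entry_inr (A B L : Module.End ℂ R2) (π : V2 →ₗ[ℂ] R2) :
    dg A B * entry (inr ℂ R2 R2) π L = entry (inr ℂ R2 R2) π (B * L) := by
  refine LinearMap.ext fun v => ?_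
  simp [dg, matOp_apply, entry_apply]

theorem matOp_mul (A B C D A' B' C' D' : Module.End ℂ R2) :
    matOp A B C D * matOp A' B' C' D' =
      matOp (A * A' + B * C') (A * B' + B * D') (C * A' + D * C') (C * B' + D * D') := by
  refine LinearMap.ext fun ⟨u, v⟩ => ?_
  simp only [matOp_apply, Module.End.mul_apply, LinearMap.add_apply, map_add, Prod.mk.injEq]
  constructor <;> abel

variable {A B : Module.End ℂ R2} {P Q : Module.End ℂ V2} {n Δ k l : ℕ}

theorem IsMatDiffOpLE.mul (hP : IsMatDiffOpLE P k) (hQ : IsMatDiffOpLE Q l) :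
    IsMatDiffOpLE (P * Q) (k + l) := by
  obtain ⟨A, B, C, D, hA, hB, hC, hD, rfl⟩ := hP
  obtain ⟨A', B', C', D', hA', hB', hC', hD', rfl⟩ := hQ
  exact ⟨_, _, _, _,
    add_mem (mul_mem_ordLE hA hA') (mul_mem_ordLE hB hC'),
    add_mem (mul_mem_ordLE hA hB') (mul_mem_ordLE hB hD'),
    add_mem (mul_mem_ordLE hC hA') (mul_mem_ordLE hD hC'),
    add_mem (mul_mem_ordLE hC hB') (mul_mem_ordLE hD hD'), matOp_mul _ _ _ _ _ _ _ _⟩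

theorem IsMatDiffOpLE.mono (hP : IsMatDiffOpLE P k) (hkl : k ≤ l) : IsMatDiffOpLE P l := by
  obtain ⟨A, B, C, D, hA, hB, hC, hD, rfl⟩ := hP
  exact ⟨A, B, C, D, ordLE_mono hkl hA, ordLE_mono hkl hB, ordLE_mono hkl hC, ordLE_mono hkl hD,
    rfl⟩

theorem isMatDiffOpLE_dg (hA : A ∈ ordLE k) (hB : B ∈ ordLE k) : IsMatDiffOpLE (dg A B) k :=
  ⟨A, 0, 0, B, hA, zero_mem (ordLE k), zero_mem (ordLE k), hB, rfl⟩

theorem isMatDiffOpLE_one : IsMatDiffOpLE 1 0 := by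
  have hone : (1 : Module.End ℂ V2) = dg 1 1 := LinearMap.ext fun ⟨u, v⟩ => by
    simp [dg, matOp_apply]
  exact hone ▸ isMatDiffOpLE_dg one_mem_ordLE one_mem_ordLE

/-- The operators generated in order at most `k`: the span of the compositions of generators that
have order at most `k`. -/
def genSpan (n Δ k : ℕ) : Submodule ℂ (Module.End ℂ V2) :=
  Submodule.span ℂ (matProdsOrd k (Gtri n Δ))

theorem genSpan_mono : Monotone (genSpan n Δ) := fun _ _ hkl =>
  Submodule.span_mono fun _ ⟨L, hL, hprod, hP⟩ => ⟨L, hL, hprod, hP.mono hkl⟩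

theorem mem_genSpan_of_mem_Gtri (hP : P ∈ Gtri n Δ) (hk : IsMatDiffOpLE P k) :
    P ∈ genSpan n Δ k :=
  Submodule.subset_span ⟨[P], by simpa using hP, by simp, hk⟩

theorem one_mem_genSpan : (1 : Module.End ℂ V2) ∈ genSpan n Δ 0 :=
  mem_genSpan_of_mem_Gtri (Or.inr rfl) isMatDiffOpLE_one

theorem mul_mem_genSpan (hP : P ∈ genSpan n Δ k) (hQ : Q ∈ genSpan n Δ l) :
    P * Q ∈ genSpan n Δ (k + l) := by
  have hPQ := Submodule.mul_mem_mul hP hQ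
  rw [genSpan, genSpan, Submodule.span_mul_span] at hPQ
  refine Submodule.span_mono ?_ hPQ
  rintro _ ⟨_, ⟨L, hL, rfl, hk⟩, _, ⟨L', hL', rfl, hl⟩, rfl⟩
  refine ⟨L ++ L', fun a ha => ?_, List.prod_append, hk.mul hl⟩
  exact (List.mem_append.1 ha).elim (hL a) (hL' a)

theorem euler_mem_ordLE : euler ∈ ordLE 1 :=
  add_mem (Mf_mul_mem_ordLE _ Dx_mem_ordLE) (Mf_mul_mem_ordLE _ Dy_mem_ordLE)

theorem eulerSub_mem_ordLE (c : ℂ) : eulerSub c ∈ ordLE 1 :=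
  sub_mem euler_mem_ordLE (Submodule.smul_mem _ _ one_mem_ordLE)

theorem eulerFalling_mem_ordLE (c : ℂ) (r : ℕ) : eulerFalling c r ∈ ordLE r := by
  induction r with
  | zero => exact one_mem_ordLE
  | succ r ih =>
    rw [eulerFalling, add_comm r 1]
    exact mul_mem_ordLE (eulerSub_mem_ordLE _) ih

theorem sl3Gen_mem_ordLE (c : ℂ) (i : Fin 8) : sl3Gen c i ∈ ordLE 1 := by
  fin_cases i
  · change J1 c ∈ ordLE 1
    rw [J1_eq_Mf_mul_eulerSub]
    exact Mf_mul_mem_ordLE _ (eulerSub_mem_ordLE c)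
  · change J2 c ∈ ordLE 1
    rw [J2_eq_Mf_mul_eulerSub]
    exact Mf_mul_mem_ordLE _ (eulerSub_mem_ordLE c)
  · exact Mf_mul_mem_ordLE _ Dx_mem_ordLE
  · exact Dx_mem_ordLE
  · exact Dy_mem_ordLE
  · exact Mf_mul_mem_ordLE _ Dy_mem_ordLE
  · exact sub_mem (Mf_mul_mem_ordLE _ Dx_mem_ordLE) (Submodule.smul_mem _ _ one_mem_ordLE)
  · exact sub_mem (Mf_mul_mem_ordLE _ Dy_mem_ordLE) (Submodule.smul_mem _ _ one_mem_ordLE)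

theorem dg_sl3Gen_mem_genSpan (n Δ : ℕ) (i : Fin 8) :
    dg (sl3Gen (n - Δ : ℕ) i) (sl3Gen n i) ∈ genSpan n Δ 1 := by
  refine mem_genSpan_of_mem_Gtri (Or.inl (Or.inl (Or.inl ?_)))
    (isMatDiffOpLE_dg (sl3Gen_mem_ordLE _ i) (sl3Gen_mem_ordLE _ i))
  fin_cases i <;> simp [sl3Gen, Tg1, Tg2, Tg3, Tg4, Tg5, Tg6, Tg7, Tg8]

theorem eulerFalling_add_eq_prod (c : ℂ) (r : ℕ) :
    eulerFalling (c + r) r =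
      ((List.range r).map fun t : ℕ => eulerSub (c + ((t + 1 : ℕ) : ℂ))).prod := by
  induction r generalizing c with
  | zero => simp [eulerFalling]
  | succ r ih =>
    rw [List.range_succ_eq_map, List.map_cons, List.prod_cons, List.map_map, eulerFalling]
    have hc : c + ((r + 1 : ℕ) : ℂ) = c + 1 + r := by push_cast; ring
    rw [hc, ih, add_sub_cancel_right, zero_add, Nat.cast_one]
    congr 3
    funext t
    rw [Function.comp_apply, Nat.cast_succ (t + 1), add_assoc, add_comm (1 : ℂ)]

theorem qbar_eq_diffMon_mul_eulerFalling {i j r : ℕ} (hΔ : Δ ≤ n) (hijr : i + j + r = Δ) :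
    qbar n Δ i j = diffMon 1 i j * eulerFalling n r := by
  have hprod : qbar n Δ i j = ((List.range r).map
      fun t : ℕ => eulerSub (((n - Δ : ℕ) : ℂ) + ((t + 1 : ℕ) : ℂ))).prod * diffMon 1 i j := by
    rw [qbar, diffMon, Mf_one, one_mul, ← mul_assoc, show Δ - i - j = r by lia]
    simp only [Nat.cast_add]
    rfl
  have hdeg : diffMon 1 i j ∈ degreeOps (-(i + j) : ℤ) :=
    diffMon_mem_degreeOps (isHomogeneous_one _ _) (by simp)
  rw [hprod, ← eulerFalling_add_eq_prod, eulerFalling_mul_of_mem_degreeOps hdeg]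
  congr 2
  rw [Nat.cast_sub hΔ, ← hijr]
  push_cast
  ring

theorem entry_inr_fst_Mf_mem_genSpan {i j : ℕ} (hij : i + j ≤ Δ) :
    entry (inr ℂ R2 R2) (fst ℂ R2 R2) (Mf (Xv ^ i * Yv ^ j)) ∈ genSpan n Δ 0 := by
  have heq : entry (inr ℂ R2 R2) (fst ℂ R2 R2) (Mf (Xv ^ i * Yv ^ j)) = Qgm i j := by
    simp [Qgm, matOp_eq_sum_entry]
  rw [heq]
  exact mem_genSpan_of_mem_Gtri (Or.inl (Or.inl (Or.inr ⟨i, j, hij, rfl⟩)))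
    ⟨0, 0, _, 0, zero_mem (ordLE 0), zero_mem (ordLE 0), Mf_mem_ordLE _, zero_mem (ordLE 0), rfl⟩

theorem entry_inl_snd_diffMon_mul_eulerFalling_mem_genSpan {i j r : ℕ} (hΔ : Δ ≤ n)
    (hijr : i + j + r = Δ) :
    entry (inl ℂ R2 R2) (snd ℂ R2 R2) (diffMon 1 i j * eulerFalling n r) ∈ genSpan n Δ Δ := by
  have heq : entry (inl ℂ R2 R2) (snd ℂ R2 R2) (diffMon 1 i j * eulerFalling n r) =
      Qgp n Δ i j := by
    simp [Qgp, matOp_eq_sum_entry, qbar_eq_diffMon_mul_eulerFalling hΔ hijr]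
  have hord : qbar n Δ i j ∈ ordLE Δ := by
    rw [qbar_eq_diffMon_mul_eulerFalling hΔ hijr, ← hijr]
    exact mul_mem_ordLE (diffMon_mem_ordLE le_rfl 1) (eulerFalling_mem_ordLE _ r)
  rw [heq]
  exact mem_genSpan_of_mem_Gtri (Or.inl (Or.inr ⟨i, j, by lia, rfl⟩))
    ⟨0, _, 0, 0, zero_mem (ordLE Δ), hord, zero_mem (ordLE Δ), zero_mem (ordLE Δ), rfl⟩

theorem Jgen_mem_genSpan : Jgen n Δ ∈ genSpan n Δ 0 :=
  mem_genSpan_of_mem_Gtri (Or.inl (Or.inl (Or.inl (by simp))))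
    (isMatDiffOpLE_dg (Submodule.smul_mem _ _ one_mem_ordLE) (Submodule.smul_mem _ _ one_mem_ordLE))

theorem entry_inl_fst_one_mem_genSpan (hΔ : Δ ≤ n) :
    entry (inl ℂ R2 R2) (fst ℂ R2 R2) 1 ∈ genSpan n Δ 0 := by
  -- For `Δ = 0` the generator `J` is scalar, and the projection is `Q⁺₀₀ ∘ Q⁻₀₀` instead.
  rcases eq_or_ne Δ 0 with rfl | h0
  · have hmul := mul_mem_genSpan
      (entry_inl_snd_diffMon_mul_eulerFalling_mem_genSpan (i := 0) (j := 0) (r := 0) hΔ rfl)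
      (entry_inr_fst_Mf_mem_genSpan (n := n) (i := 0) (j := 0) le_rfl)
    convert hmul using 1
    refine LinearMap.ext fun v => ?_
    simp [entry_apply, diffMon_zero_zero, Mf_one, eulerFalling]
  · have heq : ((2 * Δ / 3 : ℂ)) • entry (inl ℂ R2 R2) (fst ℂ R2 R2) 1 =
        Jgen n Δ - (n / 3 : ℂ) • 1 := by
      refine LinearMap.ext fun ⟨u, v⟩ => Prod.ext ?_ ?_
      · simp only [entry_apply, Jgen, dg, matOp_apply, LinearMap.smul_apply, LinearMap.sub_apply,
          LinearMap.fst_apply, LinearMap.coe_inl, LinearMap.zero_apply, Module.End.one_apply,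
          Prod.smul_mk, Prod.mk_sub_mk, add_zero]
        module
      · simp [entry_apply, Jgen, dg, matOp_apply]
    have hΔ0 : (2 * Δ / 3 : ℂ) ≠ 0 := by simpa using h0
    rw [← Submodule.smul_mem_iff _ hΔ0, heq]
    exact sub_mem Jgen_mem_genSpan (Submodule.smul_mem _ _ one_mem_genSpan)

theorem entry_inr_snd_one_mem_genSpan (hΔ : Δ ≤ n) :
    entry (inr ℂ R2 R2) (snd ℂ R2 R2) 1 ∈ genSpan n Δ 0 := by
  have heq : entry (inr ℂ R2 R2) (snd ℂ R2 R2) 1 = 1 - entry (inl ℂ R2 R2) (fst ℂ R2 R2) 1 :=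
    LinearMap.ext fun ⟨u, v⟩ => by simp [entry_apply]
  rw [heq]
  exact sub_mem one_mem_genSpan (entry_inl_fst_one_mem_genSpan hΔ)

theorem sl3Stable_comap_entry_inl (n Δ : ℕ) (π : V2 →ₗ[ℂ] R2) :
    Sl3Stable (n - Δ : ℕ) fun m => (genSpan n Δ m).comap (entry (inl ℂ R2 R2) π) where
  mono _ _ hkl := Submodule.comap_mono (genSpan_mono hkl)
  mul_mem m i A hA := by
    rw [Submodule.mem_comap, ← dg_mul_entry_inl _ (sl3Gen n i), add_comm]
    exact mul_mem_genSpan (dg_sl3Gen_mem_genSpan n Δ i) hA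

theorem sl3Stable_comap_entry_inr (n Δ : ℕ) (π : V2 →ₗ[ℂ] R2) :
    Sl3Stable n fun m => (genSpan n Δ m).comap (entry (inr ℂ R2 R2) π) where
  mono _ _ hkl := Submodule.comap_mono (genSpan_mono hkl)
  mul_mem m i A hA := by
    rw [Submodule.mem_comap, ← dg_mul_entry_inr (sl3Gen (n - Δ : ℕ) i), add_comm]
    exact mul_mem_genSpan (dg_sl3Gen_mem_genSpan n Δ i) hA

theorem entry_inl_fst_mem_genSpan (hΔ : Δ ≤ n) (hA : A ∈ ordLE (min k (n - Δ)))
    (hmaps : ∀ p ∈ Tmod (n - Δ), A p ∈ Tmod (n - Δ)) :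
    entry (inl ℂ R2 R2) (fst ℂ R2 R2) A ∈ genSpan n Δ k := by
  refine (sl3Stable_comap_entry_inl n Δ _).mem_of_mapsTo ?_ hA hmaps
  rw [Nat.sub_self]
  refine triangularGens_zero_subset fun i j hij => ?_
  obtain ⟨rfl, rfl⟩ : i = 0 ∧ j = 0 := by lia
  simpa [Mf_one] using entry_inl_fst_one_mem_genSpan hΔ

theorem entry_inl_snd_mem_genSpan (hΔ : Δ ≤ n) (hA : A ∈ ordLE (min k n))
    (hmaps : ∀ p ∈ Tmod n, A p ∈ Tmod (n - Δ)) :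
    entry (inl ℂ R2 R2) (snd ℂ R2 R2) A ∈ genSpan n Δ k := by
  refine (sl3Stable_comap_entry_inl n Δ _).mem_of_mapsTo ?_ hA hmaps
  rw [Nat.sub_sub_self hΔ]
  exact triangularGens_sub_subset hΔ fun i j r hijr =>
    entry_inl_snd_diffMon_mul_eulerFalling_mem_genSpan hΔ hijr

theorem entry_inr_fst_mem_genSpan (hA : A ∈ ordLE (min k (n - Δ)))
    (hmaps : ∀ p ∈ Tmod (n - Δ), A p ∈ Tmod n) :
    entry (inr ℂ R2 R2) (fst ℂ R2 R2) A ∈ genSpan n Δ k := by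
  refine (sl3Stable_comap_entry_inr n Δ _).mem_of_mapsTo ?_ hA hmaps
  rw [Nat.sub_eq_zero_of_le (n.sub_le Δ)]
  exact triangularGens_zero_subset fun i j hij => entry_inr_fst_Mf_mem_genSpan (by lia)

theorem entry_inr_snd_mem_genSpan (hΔ : Δ ≤ n) (hA : A ∈ ordLE (min k n))
    (hmaps : ∀ p ∈ Tmod n, A p ∈ Tmod n) :
    entry (inr ℂ R2 R2) (snd ℂ R2 R2) A ∈ genSpan n Δ k := by
  refine (sl3Stable_comap_entry_inr n Δ _).mem_of_mapsTo ?_ hA hmaps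
  rw [Nat.sub_self]
  refine triangularGens_zero_subset fun i j hij => ?_
  obtain ⟨rfl, rfl⟩ : i = 0 ∧ j = 0 := by lia
  simpa [Mf_one] using entry_inr_snd_one_mem_genSpan hΔ

theorem matOp_mapsTo_prod_Tmod_iff {A B C D : Module.End ℂ R2} {a b : ℕ} :
    (∀ w ∈ (Tmod a).prod (Tmod b), matOp A B C D w ∈ (Tmod a).prod (Tmod b)) ↔
      (∀ p ∈ Tmod a, A p ∈ Tmod a) ∧ (∀ p ∈ Tmod b, B p ∈ Tmod a) ∧
      (∀ p ∈ Tmod a, C p ∈ Tmod b) ∧ ∀ p ∈ Tmod b, D p ∈ Tmod b := by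
  constructor
  · intro h
    have hfst (p) (hp : p ∈ Tmod a) : A p ∈ Tmod a ∧ C p ∈ Tmod b := by
      simpa [matOp_apply] using h (p, 0) ⟨hp, zero_mem _⟩
    have hsnd (p) (hp : p ∈ Tmod b) : B p ∈ Tmod a ∧ D p ∈ Tmod b := by
      simpa [matOp_apply] using h (0, p) ⟨zero_mem _, hp⟩
    exact ⟨fun p hp => (hfst p hp).1, fun p hp => (hsnd p hp).1, fun p hp => (hfst p hp).2,
      fun p hp => (hsnd p hp).2⟩
  · rintro ⟨hA, hB, hC, hD⟩ w ⟨hu, hv⟩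
    exact ⟨add_mem (hA _ hu) (hB _ hv), add_mem (hC _ hu) (hD _ hv)⟩

end MatrixOperators

theorem stmt16 (n Δ k : ℕ) (hΔ : Δ ≤ n)
    (f11 f12 f21 f22 : ℕ × ℕ → R2)
    (h11 : ∀ ij : ℕ × ℕ, k < ij.1 + ij.2 → f11 ij = 0)
    (h12 : ∀ ij : ℕ × ℕ, k < ij.1 + ij.2 → f12 ij = 0)
    (h21 : ∀ ij : ℕ × ℕ, k < ij.1 + ij.2 → f21 ij = 0)
    (h22 : ∀ ij : ℕ × ℕ, k < ij.1 + ij.2 → f22 ij = 0)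
    (T : Module.End ℂ V2)
    (hT : T = matOp (diffOp (tIdx (n - Δ)) f11) (diffOp (tIdx n) f12)
                    (diffOp (tIdx (n - Δ)) f21) (diffOp (tIdx n) f22))
    (hpres : ∀ w ∈ (Tmod (n - Δ)).prod (Tmod n),
      T w ∈ (Tmod (n - Δ)).prod (Tmod n)) :
    T ∈ Submodule.span ℂ (matProdsOrd k (Gtri n Δ)) := by
  subst hT
  obtain ⟨hm11, hm12, hm21, hm22⟩ := matOp_mapsTo_prod_Tmod_iff.1 hpres
  rw [matOp_eq_sum_entry]
  exact add_mem (add_mem (add_mem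
    (entry_inl_fst_mem_genSpan hΔ (diffOp_tIdx_mem_ordLE h11) hm11)
    (entry_inl_snd_mem_genSpan hΔ (diffOp_tIdx_mem_ordLE h12) hm12))
    (entry_inr_fst_mem_genSpan (diffOp_tIdx_mem_ordLE h21) hm21))
    (entry_inr_snd_mem_genSpan hΔ (diffOp_tIdx_mem_ordLE h22) hm22)
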